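/- Let α_w, α_n ∈ (0,1) with α_w < α_n, let w : {1,…,n} → ℝ≥0 be weights with total weight W > 0, and let s > 0 be a real number. Define the ticket assignment t by t i = ⌊w i·s + α_w⌋ for each i, with total T = Σ_i t i. If T ≥ (α_w(1 − α_w)/(α_n − α_w)) · n, then t satisfies the Weight Restriction condition with parameters (α_w, α_n). -/

import Mathlib

/-!
Write `t i = w i * s + e i`, where the rounding error satisfies `αw - 1 ≤ e i ≤ αw`. For a set `S`
of weight less than `αw * W`,
`t(S) - αw * T = s * (w(S) - αw * W) + ((1 - αw) * e(S) - αw * e(Sᶜ)) < αw * (1 - αw) * n`,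
because each index, whether in `S` or not, contributes at most `αw * (1 - αw)` to the error term.
The lower bound on `T` says precisely that the right-hand side is at most `(αn - αw) * T`.
-/

section Rounding

variable {ι R : Type*} [Fintype ι] [CommRing R] [LinearOrder R]

/-- The Weight Restriction condition with parameters `(αw, αn)`: every set of less than a fraction
`αw` of the total weight holds less than a fraction `αn` of the tickets. Tickets take values in the
ordered ring of the weights; whole numbers of tickets are cast into it. -/
def WeightRestriction (αw αn : R) (w t : ι → R) : Prop :=
  ∀ S : Finset ι, ∑ i ∈ S, w i < αw * ∑ i, w i → ∑ i ∈ S, t i < αn * ∑ i, t i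

variable [IsStrictOrderedRing R]

theorem sum_sub_mul_sum_le_of_mem_Icc {a : R} (ha : a ∈ Set.Icc 0 1) {e : ι → R}
    (he : ∀ i, e i ∈ Set.Icc (a - 1) a) (S : Finset ι) :
    ∑ i ∈ S, e i - a * ∑ i, e i ≤ a * (1 - a) * Fintype.card ι := by
  classical
  have sum_le : ∑ i ∈ S, e i ≤ S.card * a := by
    simpa only [nsmul_eq_mul] using S.sum_le_card_nsmul e a fun i _ => (he i).2
  have le_sum_compl : Sᶜ.card * (a - 1) ≤ ∑ i ∈ Sᶜ, e i := by
    simpa only [nsmul_eq_mul] using Sᶜ.card_nsmul_le_sum e (a - 1) fun i _ => (he i).1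
  calc ∑ i ∈ S, e i - a * ∑ i, e i
      = (1 - a) * ∑ i ∈ S, e i - a * ∑ i ∈ Sᶜ, e i := by
        rw [← Finset.sum_add_sum_compl S e]; ring
    _ ≤ (1 - a) * (S.card * a) - a * (Sᶜ.card * (a - 1)) :=
        sub_le_sub (mul_le_mul_of_nonneg_left sum_le (sub_nonneg.2 ha.2))
          (mul_le_mul_of_nonneg_left le_sum_compl ha.1)
    _ = a * (1 - a) * Fintype.card ι := by
        rw [← S.card_add_card_compl]; push_cast; ring

theorem sum_sub_mul_sum_lt_of_sum_lt {a s : R} (ha : a ∈ Set.Icc 0 1) (hs : 0 < s) {w t : ι → R}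
    (ht : ∀ i, t i - w i * s ∈ Set.Icc (a - 1) a) {S : Finset ι}
    (hS : ∑ i ∈ S, w i < a * ∑ i, w i) :
    ∑ i ∈ S, t i - a * ∑ i, t i < a * (1 - a) * Fintype.card ι := by
  have error_le := sum_sub_mul_sum_le_of_mem_Icc ha ht S
  simp only [Finset.sum_sub_distrib, ← Finset.sum_mul] at error_le
  have scaled_lt : (∑ i ∈ S, w i) * s < a * (∑ i, w i) * s := mul_lt_mul_of_pos_right hS hs
  linarith

theorem natFloor_add_sub_mem_Ioc [FloorSemiring R] {x a : R} (h : 0 ≤ x + a) :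
    (⌊x + a⌋₊ : R) - x ∈ Set.Ioc (a - 1) a :=
  ⟨by linarith [Nat.sub_one_lt_floor (x + a)], by linarith [Nat.floor_le h]⟩

end Rounding

theorem large_floor_assignment_is_valid_general {ι K : Type*} [Fintype ι] [Field K]
    [LinearOrder K] [IsStrictOrderedRing K] {αw αn s : K}
    (hαw : αw ∈ Set.Icc 0 1) (hlt : αw < αn) (hs : 0 < s) {w t : ι → K}
    (ht : ∀ i, t i - w i * s ∈ Set.Icc (αw - 1) αw)
    (hT : αw * (1 - αw) / (αn - αw) * Fintype.card ι ≤ ∑ i, t i) :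
    WeightRestriction αw αn w t := by
  intro S hS
  have excess_lt := sum_sub_mul_sum_lt_of_sum_lt hαw hs ht hS
  have le_gap_mul : αw * (1 - αw) * Fintype.card ι ≤ (αn - αw) * ∑ i, t i := by
    rwa [div_mul_eq_mul_div, div_le_iff₀' (sub_pos.2 hlt)] at hT
  linarith

/-- **Bootstrapping.** If the ticket assignment `t i = ⌊w i · s + αw⌋` has a
total number of tickets `T ≥ (αw (1 - αw)/(αn - αw)) * n`, then it satisfies
the Weight Restriction condition with parameters `(αw, αn)`. -/
theorem large_floor_assignment_is_valid
    (αw αn : ℝ) (hαw0 : 0 < αw) (hαw1 : αw < 1)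
    (hαn0 : 0 < αn) (hαn1 : αn < 1) (hlt : αw < αn)
    (n : ℕ) (w : Fin n → ℝ) (hw : ∀ i, 0 ≤ w i)
    (hW : 0 < ∑ i, w i)
    (s : ℝ) (hs : 0 < s)
    (t : Fin n → ℕ) (ht : ∀ i, t i = ⌊w i * s + αw⌋₊)
    (hT : ((∑ i, t i : ℕ) : ℝ) ≥ (αw * (1 - αw) / (αn - αw)) * n) :
    ∀ S : Finset (Fin n),
      (∑ i ∈ S, w i) < αw * (∑ i, w i) →
      ((∑ i ∈ S, t i : ℕ) : ℝ) < αn * ((∑ i, t i : ℕ) : ℝ) := by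
  have rounding_error (i : Fin n) : (t i : ℝ) - w i * s ∈ Set.Icc (αw - 1) αw := ht i ▸
    Set.Ioc_subset_Icc_self (natFloor_add_sub_mem_Ioc (by have := hw i; positivity))
  push_cast at hT ⊢
  exact large_floor_assignment_is_valid_general ⟨hαw0.le, hαw1.le⟩ hlt hs rounding_error (by simpa)
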